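/- arXiv:1409.6011 — 2 statements merged into one kernel-verified Lean document; each statement's English description precedes it below -/
import Mathlib

section
/- Let R₁ > 0, σ > 0, γ ∈ ℝ, and let [ℓ,u] ⊆ [−R₁, R₁] with ℓ < u. Define s(x,t) = e^{γt} e^{−t²x/(2σ²)} and h(α) = (∫_ℓ^u s(1+α,t) dt · ∫_ℓ^u s(1−α,t) dt) / (∫_ℓ^u s(1,t) dt)². Then for every α with 0 < α ≤ 1/2, h is differentiable at α and h'(α) ≤ (4·α·R₁²/σ²)·h(α). -/
open MeasureTheory intervalIntegral

/-- The needle ratio function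
`h(α) = (∫ s(1+α,t)dt · ∫ s(1-α,t)dt)/(∫ s(1,t)dt)²`
where `s(x,t) = e^{γt} e^{-t²x/(2σ²)}`. -/
noncomputable def needleRatio (σ γ ℓ u : ℝ) : ℝ → ℝ := fun α =>
  ((∫ t in ℓ..u, Real.exp (γ * t) * Real.exp (-t ^ 2 * (1 + α) / (2 * σ ^ 2))) *
      (∫ t in ℓ..u, Real.exp (γ * t) * Real.exp (-t ^ 2 * (1 - α) / (2 * σ ^ 2)))) /
    (∫ t in ℓ..u, Real.exp (γ * t) * Real.exp (-t ^ 2 / (2 * σ ^ 2))) ^ 2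

open ProbabilityTheory Set

/-!
Let `K` be the cumulant generating function of `t²` under the probability density proportional to
`e^{γt}` on `[ℓ, u]`. With `c = 1 / (2σ²)`, the needle ratio is
`exp (K (-c (1 + α)) + K (-c (1 - α)) - 2 K (-c))`, so its logarithmic derivative is
`c (K' (-c (1 - α)) - K' (-c (1 + α)))`.

For `θ > 0`, `K'' (-θ)` is the variance of `t²` under the density proportional to `e^{γt - θt²}`.
As `t²` is `2R₁`-Lipschitz on `[-R₁, R₁]`, this is at most `4R₁²` times the variance of `t`, which
in turn is at most `1 / (2θ)` because the potential `φ t = θt² - γt` is `2θ`-strongly convex: with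
`m` the mean of `t`, integrating `((t - m) e^{-φ t})'` leaves boundary terms of a favourable sign.
So `K'' (-θ) ≤ 2R₁² / θ`, and the mean value inequality gives the claim for `α ≤ 1 / 2`. For larger
`α` it suffices that `0 ≤ K' ≤ R₁²`.
-/

section BoundedRandomVariable

variable {Ω : Type*} [MeasurableSpace Ω] {μ : Measure Ω} {X : Ω → ℝ}

lemma variance_sq_le_of_mem_Icc [IsProbabilityMeasure μ] {R : ℝ} (hX : AEMeasurable X μ)
    (hXR : ∀ᵐ ω ∂μ, X ω ∈ Icc (-R) R) :
    Var[fun ω => X ω ^ 2; μ] ≤ (2 * R) ^ 2 * Var[X; μ] := by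
  set m := μ[X]
  have hX_memLp : MemLp X 2 μ := memLp_of_bounded hXR hX.aestronglyMeasurable 2
  have hm : m ∈ Icc (-R) R :=
    (convex_Icc _ _).integral_mem isClosed_Icc hXR (hX_memLp.integrable one_le_two)
  have hpointwise : ∀ᵐ ω ∂μ, (X ω ^ 2 - m ^ 2) ^ 2 ≤ (2 * R) ^ 2 * (X ω - m) ^ 2 := by
    filter_upwards [hXR] with ω hω
    have hsum : (X ω + m) ^ 2 ≤ (2 * R) ^ 2 :=
      sq_le_sq' (by linarith [hω.1, hm.1]) (by linarith [hω.2, hm.2])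
    calc (X ω ^ 2 - m ^ 2) ^ 2 = (X ω + m) ^ 2 * (X ω - m) ^ 2 := by ring
      _ ≤ (2 * R) ^ 2 * (X ω - m) ^ 2 := by gcongr
  have hbound_int : Integrable (fun ω => (2 * R) ^ 2 * (X ω - m) ^ 2) μ :=
    (hX_memLp.sub (memLp_const m)).integrable_sq.const_mul _
  have hsq : AEStronglyMeasurable (fun ω => X ω ^ 2) μ := (hX.pow_const 2).aestronglyMeasurable
  calc Var[fun ω => X ω ^ 2; μ] = Var[fun ω => X ω ^ 2 - m ^ 2; μ] :=
        (variance_sub_const hsq _).symm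
    _ ≤ ∫ ω, (X ω ^ 2 - m ^ 2) ^ 2 ∂μ :=
        variance_le_expectation_sq (hsq.sub aestronglyMeasurable_const)
    _ ≤ ∫ ω, (2 * R) ^ 2 * (X ω - m) ^ 2 ∂μ :=
        integral_mono_of_nonneg (.of_forall fun _ => sq_nonneg _) hbound_int hpointwise
    _ = (2 * R) ^ 2 * Var[X; μ] := by
        rw [MeasureTheory.integral_const_mul, variance_eq_integral hX]

lemma integrableExpSet_eq_univ_of_mem_Icc [IsFiniteMeasure μ] {a b : ℝ} (hX : AEMeasurable X μ)
    (hab : ∀ᵐ ω ∂μ, X ω ∈ Icc a b) : integrableExpSet X μ = univ :=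
  eq_univ_of_forall fun _ => integrable_exp_mul_of_mem_Icc hX hab

lemma deriv_cgf_mem_Icc [IsFiniteMeasure μ] [NeZero μ] {a b : ℝ} (hX : AEMeasurable X μ)
    (hab : ∀ᵐ ω ∂μ, X ω ∈ Icc a b) (s : ℝ) : deriv (cgf X μ) s ∈ Icc a b := by
  have hs : s ∈ interior (integrableExpSet X μ) := by
    simp [integrableExpSet_eq_univ_of_mem_Icc hX hab]
  have := isProbabilityMeasure_tilted (integrable_exp_mul_of_mem_Icc (t := s) hX hab)
  rw [← integral_tilted_mul_self hs]
  exact (convex_Icc a b).integral_mem isClosed_Icc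
    ((tilted_absolutelyContinuous μ _).ae_le hab) ((memLp_tilted_mul hs 1).integrable le_rfl)

end BoundedRandomVariable

section TiltedInterval

variable {φ : ℝ → ℝ} {ℓ u : ℝ}

lemma isProbabilityMeasure_tilted_Ioc (hφ : Continuous φ) (hlu : ℓ < u) :
    IsProbabilityMeasure ((volume.restrict (Ioc ℓ u)).tilted φ) := by
  have : NeZero (volume.restrict (Ioc ℓ u)) := ⟨by simp [hlu]⟩
  exact isProbabilityMeasure_tilted hφ.rexp.integrableOn_Ioc

lemma ae_tilted_Ioc_mem_Icc :
    ∀ᵐ t ∂(volume.restrict (Ioc ℓ u)).tilted φ, t ∈ Icc ℓ u :=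
  (tilted_absolutelyContinuous _ _).ae_le <|
    (ae_restrict_mem measurableSet_Ioc).mono fun _ ht => Ioc_subset_Icc_self ht

lemma integrable_tilted_Ioc (hφ : Continuous φ) {f : ℝ → ℝ} (hf : Continuous f) :
    Integrable f ((volume.restrict (Ioc ℓ u)).tilted φ) :=
  (integrable_tilted_iff hφ.rexp.integrableOn_Ioc f).mpr
    (hφ.rexp.smul hf).integrableOn_Ioc

end TiltedInterval

section StrongConvexity

variable {φ : ℝ → ℝ} {κ ℓ u : ℝ}

lemma strongConvexOn_quadratic (a b : ℝ) {s : Set ℝ} (hs : Convex ℝ s) :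
    StrongConvexOn s (2 * a) (fun t => a * t ^ 2 - b * t) := by
  rw [strongConvexOn_iff_convex]
  refine ((LinearMap.mulLeft ℝ (-b)).convexOn hs).congr fun t _ => ?_
  rw [LinearMap.mulLeft_apply, Real.norm_eq_abs, sq_abs]
  ring

lemma mul_sq_sub_le_of_strongConvexOn {s : Set ℝ} (hφ : StrongConvexOn s κ φ)
    (hd : ∀ x ∈ s, DifferentiableAt ℝ φ x) {x y : ℝ} (hx : x ∈ s) (hy : y ∈ s) :
    κ * (x - y) ^ 2 ≤ (x - y) * (deriv φ x - deriv φ y) := by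
  have hderiv : ∀ z ∈ s, HasDerivAt (fun t => φ t - κ / 2 * ‖t‖ ^ 2) (deriv φ z - κ * z) z := by
    intro z hz
    simp only [Real.norm_eq_abs, sq_abs]
    exact ((hd z hz).hasDerivAt.sub ((hasDerivAt_pow 2 z).const_mul (κ / 2))).congr_deriv
      (by push_cast; ring)
  have hmono := (strongConvexOn_iff_convex.mp hφ).monotoneOn_deriv
    fun z hz => (hderiv z hz).differentiableAt
  have hprod := (monovaryOn_id_iff.mpr hmono).sub_mul_sub_nonneg hy hx
  rw [(hderiv x hx).deriv, (hderiv y hy).deriv, id, id] at hprod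
  linarith

lemma integral_sub_mul_deriv_tilted_neg_le_one (hφ : ContDiff ℝ 1 φ) {m : ℝ}
    (hm : m ∈ Icc ℓ u) :
    ∫ t, (t - m) * deriv φ t ∂(volume.restrict (Ioc ℓ u)).tilted (fun t => -φ t) ≤ 1 := by
  have hlu : ℓ ≤ u := hm.1.trans hm.2
  have : Continuous φ := hφ.continuous
  have : Continuous (deriv φ) := hφ.continuous_deriv le_rfl
  set Z := ∫ t in ℓ..u, Real.exp (-φ t)
  set I := ∫ t in ℓ..u, Real.exp (-φ t) * ((t - m) * deriv φ t)
  have hderiv : ∀ t ∈ uIcc ℓ u, HasDerivAt (fun t => (t - m) * Real.exp (-φ t))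
      (Real.exp (-φ t) - Real.exp (-φ t) * ((t - m) * deriv φ t)) t := fun t _ =>
    (((hasDerivAt_id t).sub_const m).mul
      (hφ.differentiable one_ne_zero t).hasDerivAt.fun_neg.exp).congr_deriv
        (by simp only [id]; ring)
  have hparts : Z - I = (u - m) * Real.exp (-φ u) - (ℓ - m) * Real.exp (-φ ℓ) := by
    rw [← integral_eq_sub_of_hasDerivAt hderiv (Continuous.intervalIntegrable (by fun_prop) _ _),
      integral_sub (Continuous.intervalIntegrable (by fun_prop) _ _)
        (Continuous.intervalIntegrable (by fun_prop) _ _)]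
  have hIZ : I ≤ Z := by
    have hu : 0 ≤ (u - m) * Real.exp (-φ u) := mul_nonneg (sub_nonneg.mpr hm.2) (Real.exp_pos _).le
    have hℓ : 0 ≤ (m - ℓ) * Real.exp (-φ ℓ) := mul_nonneg (sub_nonneg.mpr hm.1) (Real.exp_pos _).le
    linarith
  have hZ : 0 ≤ Z := integral_nonneg hlu fun t _ => (Real.exp_pos _).le
  calc ∫ t, (t - m) * deriv φ t ∂(volume.restrict (Ioc ℓ u)).tilted (fun t => -φ t) = I / Z := by
        simp only [integral_tilted, ← integral_of_le hlu, smul_eq_mul, div_mul_eq_mul_div,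
          intervalIntegral.integral_div, Z, I]
    _ ≤ 1 := div_le_one_of_le₀ hIZ hZ

lemma variance_tilted_neg_le_inv_of_strongConvexOn (hφ : ContDiff ℝ 1 φ) (hκ : 0 < κ)
    (hlu : ℓ < u) (hconv : StrongConvexOn (Icc ℓ u) κ φ) :
    Var[fun t => t; (volume.restrict (Ioc ℓ u)).tilted (fun t => -φ t)] ≤ κ⁻¹ := by
  have hφ_cont : Continuous fun t => -φ t := hφ.continuous.neg
  have : Continuous (deriv φ) := hφ.continuous_deriv le_rfl
  set ν := (volume.restrict (Ioc ℓ u)).tilted (fun t => -φ t)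
  have : IsProbabilityMeasure ν := isProbabilityMeasure_tilted_Ioc hφ_cont hlu
  have hint {f : ℝ → ℝ} (hf : Continuous f) : Integrable f ν := integrable_tilted_Ioc hφ_cont hf
  have hmem : ∀ᵐ t ∂ν, t ∈ Icc ℓ u := ae_tilted_Ioc_mem_Icc
  set m := ∫ t, t ∂ν with hm_def
  have hm : m ∈ Icc ℓ u := (convex_Icc ℓ u).integral_mem isClosed_Icc hmem (hint continuous_id)
  have hcentred : ∫ t, (t - m) * deriv φ m ∂ν = 0 := by
    rw [MeasureTheory.integral_mul_const,
      MeasureTheory.integral_sub (hint continuous_id') (integrable_const m)]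
    simp [← hm_def]
  rw [← one_div, le_div_iff₀' hκ, variance_eq_integral aemeasurable_id', ← hm_def,
    ← MeasureTheory.integral_const_mul]
  calc ∫ t, κ * (t - m) ^ 2 ∂ν
      ≤ ∫ t, ((t - m) * deriv φ t - (t - m) * deriv φ m) ∂ν := by
        refine integral_mono_ae (hint (by fun_prop)) (hint (by fun_prop)) ?_
        filter_upwards [hmem] with t ht
        rw [← mul_sub]
        exact mul_sq_sub_le_of_strongConvexOn hconv
          (fun x _ => hφ.differentiable one_ne_zero x) ht hm
    _ = ∫ t, (t - m) * deriv φ t ∂ν := by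
        rw [MeasureTheory.integral_sub (hint (by fun_prop)) (hint (by fun_prop)), hcentred,
          sub_zero]
    _ ≤ 1 := integral_sub_mul_deriv_tilted_neg_le_one hφ hm

end StrongConvexity

section NeedleCgf

variable {ℓ u : ℝ}

/-- The probability measure on `(ℓ, u]` with density proportional to `t ↦ e^{γt}`. -/
noncomputable def needleMeasure (γ ℓ u : ℝ) : Measure ℝ :=
  (volume.restrict (Ioc ℓ u)).tilted (fun t => γ * t)

/-- The cumulant generating function of `t²` under `needleMeasure γ ℓ u`, through which the
needle ratio is expressed. -/
noncomputable def needleCgf (γ ℓ u : ℝ) : ℝ → ℝ :=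
  cgf (fun t => t ^ 2) (needleMeasure γ ℓ u)

lemma isProbabilityMeasure_needleMeasure (γ : ℝ) (hlu : ℓ < u) :
    IsProbabilityMeasure (needleMeasure γ ℓ u) :=
  isProbabilityMeasure_tilted_Ioc (by fun_prop) hlu

lemma ae_needleMeasure_sq_mem_Icc (γ : ℝ) {R : ℝ} (hℓ : -R ≤ ℓ) (hu : u ≤ R) :
    ∀ᵐ t ∂needleMeasure γ ℓ u, t ^ 2 ∈ Icc 0 (R ^ 2) := by
  filter_upwards [ae_tilted_Ioc_mem_Icc] with t ht
  exact ⟨sq_nonneg t, sq_le_sq' (hℓ.trans ht.1) (ht.2.trans hu)⟩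

lemma deriv_needleCgf_mem_Icc (γ : ℝ) {R : ℝ} (hℓ : -R ≤ ℓ) (hlu : ℓ < u) (hu : u ≤ R) (s : ℝ) :
    deriv (needleCgf γ ℓ u) s ∈ Icc 0 (R ^ 2) :=
  have := isProbabilityMeasure_needleMeasure γ hlu
  deriv_cgf_mem_Icc (by fun_prop) (ae_needleMeasure_sq_mem_Icc γ hℓ hu) s

lemma integrableExpSet_needleMeasure (γ ℓ u : ℝ) :
    integrableExpSet (fun t => t ^ 2) (needleMeasure γ ℓ u) = univ :=
  eq_univ_of_forall fun s => integrable_tilted_Ioc (by fun_prop) (by fun_prop)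

lemma analyticAt_needleCgf (γ ℓ u s : ℝ) : AnalyticAt ℝ (needleCgf γ ℓ u) s :=
  analyticAt_cgf (by simp [integrableExpSet_needleMeasure])

lemma needleMeasure_tilted_sq (γ ℓ u s : ℝ) :
    (needleMeasure γ ℓ u).tilted (fun t => s * t ^ 2) =
      (volume.restrict (Ioc ℓ u)).tilted (fun t => -(-s * t ^ 2 - γ * t)) := by
  have hint : IntegrableOn (fun t => Real.exp (γ * t)) (Ioc ℓ u) :=
    Continuous.integrableOn_Ioc (by fun_prop)
  rw [needleMeasure, tilted_tilted hint]
  congr 1 with t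
  rw [Pi.add_apply]
  ring

lemma iteratedDeriv_two_needleCgf_le (γ : ℝ) {R s : ℝ} (hℓ : -R ≤ ℓ) (hlu : ℓ < u) (hu : u ≤ R)
    (hs : s < 0) : iteratedDeriv 2 (needleCgf γ ℓ u) s ≤ 2 * R ^ 2 / -s := by
  rw [needleCgf, ← variance_tilted_mul (by simp [integrableExpSet_needleMeasure]),
    needleMeasure_tilted_sq]
  set φ : ℝ → ℝ := fun t => -s * t ^ 2 - γ * t
  set ν := (volume.restrict (Ioc ℓ u)).tilted (fun t => -φ t)
  have : IsProbabilityMeasure ν := isProbabilityMeasure_tilted_Ioc (by fun_prop) hlu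
  have hmem : ∀ᵐ t ∂ν, t ∈ Icc (-R) R :=
    (ae_tilted_Ioc_mem_Icc).mono fun _ ht => Icc_subset_Icc hℓ hu ht
  calc Var[fun t => t ^ 2; ν] ≤ (2 * R) ^ 2 * Var[fun t => t; ν] :=
        variance_sq_le_of_mem_Icc aemeasurable_id' hmem
    _ ≤ (2 * R) ^ 2 * (2 * -s)⁻¹ := by
        gcongr
        exact variance_tilted_neg_le_inv_of_strongConvexOn (by fun_prop) (by linarith) hlu
          (strongConvexOn_quadratic (-s) γ (convex_Icc ℓ u))
    _ = 2 * R ^ 2 / -s := by field_simp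

lemma deriv_needleCgf_sub_le (γ : ℝ) {R r s : ℝ} (hℓ : -R ≤ ℓ) (hlu : ℓ < u) (hu : u ≤ R)
    (hrs : r ≤ s) (hs : s < 0) :
    deriv (needleCgf γ ℓ u) s - deriv (needleCgf γ ℓ u) r ≤ 2 * R ^ 2 / -s * (s - r) := by
  have hdiff : Differentiable ℝ (deriv (needleCgf γ ℓ u)) := fun t =>
    (analyticAt_needleCgf γ ℓ u t).deriv.differentiableAt
  refine (convex_Iic s).image_sub_le_mul_sub_of_deriv_le hdiff.continuous.continuousOn
    hdiff.differentiableOn (fun t ht => ?_) r hrs s self_mem_Iic hrs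
  have hts : t ≤ s := mem_Iic.mp (interior_subset ht)
  calc deriv (deriv (needleCgf γ ℓ u)) t = iteratedDeriv 2 (needleCgf γ ℓ u) t := by
        rw [iteratedDeriv_succ, iteratedDeriv_one]
    _ ≤ 2 * R ^ 2 / -t := iteratedDeriv_two_needleCgf_le γ hℓ hlu hu (hts.trans_lt hs)
    _ ≤ 2 * R ^ 2 / -s := by
        have : 0 < -s := neg_pos.mpr hs
        gcongr

lemma deriv_needleCgf_symm_sub_le (γ : ℝ) {R c α : ℝ} (hℓ : -R ≤ ℓ) (hlu : ℓ < u) (hu : u ≤ R)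
    (hc : 0 < c) (hα : 0 ≤ α) :
    deriv (needleCgf γ ℓ u) (-(c * (1 - α))) - deriv (needleCgf γ ℓ u) (-(c * (1 + α))) ≤
      8 * α * R ^ 2 := by
  obtain hα_le | hα_gt := le_or_gt α (1 / 2)
  · have hα_sub : 0 < 1 - α := by linarith
    have hright : -(c * (1 - α)) < 0 := neg_neg_of_pos (mul_pos hc hα_sub)
    have hleft : -(c * (1 + α)) ≤ -(c * (1 - α)) := by gcongr; linarith
    calc deriv (needleCgf γ ℓ u) (-(c * (1 - α))) - deriv (needleCgf γ ℓ u) (-(c * (1 + α)))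
        ≤ 2 * R ^ 2 / -(-(c * (1 - α))) * (-(c * (1 - α)) - -(c * (1 + α))) :=
          deriv_needleCgf_sub_le γ hℓ hlu hu hleft hright
      _ = 4 * α * R ^ 2 / (1 - α) := by field_simp; ring
      _ ≤ 4 * α * R ^ 2 / (1 / 2) := by gcongr; linarith
      _ = 8 * α * R ^ 2 := by ring
  · have hupper := (deriv_needleCgf_mem_Icc γ hℓ hlu hu (-(c * (1 - α)))).2
    have hlower := (deriv_needleCgf_mem_Icc γ hℓ hlu hu (-(c * (1 + α)))).1
    calc deriv (needleCgf γ ℓ u) (-(c * (1 - α))) - deriv (needleCgf γ ℓ u) (-(c * (1 + α)))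
        ≤ R ^ 2 := by linarith
      _ ≤ 8 * α * R ^ 2 := le_mul_of_one_le_left (sq_nonneg R) (by linarith)

end NeedleCgf

section NeedleRatio

variable {ℓ u : ℝ}

lemma integral_exp_mul_pos (γ : ℝ) (hlu : ℓ < u) : 0 < ∫ t in ℓ..u, Real.exp (γ * t) :=
  intervalIntegral_pos_of_pos (Continuous.intervalIntegrable (by fun_prop) _ _)
    (fun _ => Real.exp_pos _) hlu

lemma integral_exp_mul_exp_eq_exp_needleCgf (σ γ : ℝ) (hlu : ℓ < u) (x : ℝ) :
    ∫ t in ℓ..u, Real.exp (γ * t) * Real.exp (-t ^ 2 * x / (2 * σ ^ 2)) =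
      (∫ t in ℓ..u, Real.exp (γ * t)) *
        Real.exp (needleCgf γ ℓ u (-((2 * σ ^ 2)⁻¹ * x))) := by
  have := isProbabilityMeasure_needleMeasure γ hlu
  have hexp : Integrable (fun t => Real.exp (-((2 * σ ^ 2)⁻¹ * x) * t ^ 2))
      (needleMeasure γ ℓ u) := integrable_tilted_Ioc (by fun_prop) (by fun_prop)
  rw [needleCgf, exp_cgf hexp, mgf, needleMeasure, integral_exp_tilted, ← integral_of_le hlu.le,
    ← integral_of_le hlu.le, mul_div_cancel₀ _ (integral_exp_mul_pos γ hlu).ne']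
  congr 1 with t
  rw [← Real.exp_add, Pi.add_apply]
  ring_nf

lemma needleRatio_eq_exp_needleCgf (σ γ : ℝ) (hlu : ℓ < u) (α : ℝ) :
    needleRatio σ γ ℓ u α =
      Real.exp (needleCgf γ ℓ u (-((2 * σ ^ 2)⁻¹ * (1 + α))) +
        needleCgf γ ℓ u (-((2 * σ ^ 2)⁻¹ * (1 - α))) - 2 * needleCgf γ ℓ u (-(2 * σ ^ 2)⁻¹)) := by
  have hZ := (integral_exp_mul_pos γ hlu).ne'
  have hintegral := integral_exp_mul_exp_eq_exp_needleCgf σ γ hlu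
  have hintegral_one := hintegral 1
  simp only [mul_one] at hintegral_one
  rw [needleRatio, hintegral, hintegral, hintegral_one, Real.exp_sub, Real.exp_add,
    two_mul (needleCgf _ _ _ _), Real.exp_add]
  field_simp

lemma hasDerivAt_needleRatio (σ γ : ℝ) (hlu : ℓ < u) (α : ℝ) :
    HasDerivAt (needleRatio σ γ ℓ u)
      ((2 * σ ^ 2)⁻¹ * (deriv (needleCgf γ ℓ u) (-((2 * σ ^ 2)⁻¹ * (1 - α))) -
        deriv (needleCgf γ ℓ u) (-((2 * σ ^ 2)⁻¹ * (1 + α)))) * needleRatio σ γ ℓ u α) α := by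
  set c := (2 * σ ^ 2)⁻¹
  have hcgf (s : ℝ) : HasDerivAt (needleCgf γ ℓ u) (deriv (needleCgf γ ℓ u) s) s :=
    (analyticAt_needleCgf γ ℓ u s).differentiableAt.hasDerivAt
  have hplus : HasDerivAt (fun β => -(c * (1 + β))) (-(c * 1)) α :=
    (((hasDerivAt_id α).const_add 1).const_mul c).fun_neg
  have hminus : HasDerivAt (fun β => -(c * (1 - β))) (-(c * -1)) α :=
    (((hasDerivAt_id α).const_sub 1).const_mul c).fun_neg
  rw [funext (needleRatio_eq_exp_needleCgf σ γ hlu)]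
  refine (((hcgf _).comp α hplus).add ((hcgf _).comp α hminus)).sub_const _ |>.exp.congr_deriv ?_
  simp only [Pi.add_apply, Function.comp_apply]
  ring

theorem needle_ratio_deriv_bound_general {R₁ σ : ℝ} (γ : ℝ) {α : ℝ} (hσ : σ ≠ 0)
    (hℓ : -R₁ ≤ ℓ) (hlu : ℓ < u) (hu : u ≤ R₁) (hα : 0 ≤ α) :
    DifferentiableAt ℝ (needleRatio σ γ ℓ u) α ∧
      deriv (needleRatio σ γ ℓ u) α ≤
        4 * α * R₁ ^ 2 / σ ^ 2 * needleRatio σ γ ℓ u α := by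
  have hderiv := hasDerivAt_needleRatio σ γ hlu α
  have hratio : 0 ≤ needleRatio σ γ ℓ u α := by
    rw [needleRatio_eq_exp_needleCgf σ γ hlu]
    exact (Real.exp_pos _).le
  refine ⟨hderiv.differentiableAt, hderiv.deriv.trans_le ?_⟩
  gcongr
  have hc : 0 < (2 * σ ^ 2)⁻¹ := by positivity
  calc (2 * σ ^ 2)⁻¹ * (deriv (needleCgf γ ℓ u) (-((2 * σ ^ 2)⁻¹ * (1 - α))) -
        deriv (needleCgf γ ℓ u) (-((2 * σ ^ 2)⁻¹ * (1 + α))))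
      ≤ (2 * σ ^ 2)⁻¹ * (8 * α * R₁ ^ 2) := by
        gcongr
        exact deriv_needleCgf_symm_sub_le γ hℓ hlu hu hc hα
    _ = 4 * α * R₁ ^ 2 / σ ^ 2 := by field_simp; ring

end NeedleRatio

/-- Differential inequality for the needle ratio: for `[ℓ,u] ⊆ [-R₁,R₁]`
with `ℓ < u` and `0 < α ≤ 1/2`, `h` is differentiable at `α` and
`h'(α) ≤ (4αR₁²/σ²)·h(α)`. -/
theorem needle_ratio_deriv_bound
    (R₁ σ γ ℓ u : ℝ) (hR : 0 < R₁) (hσ : 0 < σ)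
    (hℓ : -R₁ ≤ ℓ) (hlu : ℓ < u) (hu : u ≤ R₁)
    (α : ℝ) (hα0 : 0 < α) (hα : α ≤ 1 / 2) :
    DifferentiableAt ℝ (needleRatio σ γ ℓ u) α ∧
      deriv (needleRatio σ γ ℓ u) α ≤
        4 * α * R₁ ^ 2 / σ ^ 2 * needleRatio σ γ ℓ u α := by
  exact needle_ratio_deriv_bound_general γ hσ.ne' hℓ hlu hu hα0.le
end

section
/- Let n ≥ 1, let K ⊆ ℝⁿ be a convex body, σ > 0, and 0 < α < 1. Then (∫_K e^{−(1−α)‖x‖²/(2σ²)} dx) · (∫_K e^{−(1+α)‖x‖²/(2σ²)} dx) ≤ (1/(1−α²))^{n+1} · (∫_K e^{−‖x‖²/(2σ²)} dx)². -/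
open MeasureTheory

/-!
For convex `g`, substituting `x = y / t` turns `t ^ n * ∫_K exp (-t * g x) dx` into the integral
over `t • K` of `exp (-t * g (y / t))`. The perspective `(t, y) ↦ t * g (y / t)` is jointly convex,
so this integral is logconcave in `t` by Prékopa's theorem on marginals. Comparing `t = 1 - α` and
`t = 1 + α` with their midpoint `t = 1`, for `g x = ‖x‖ ^ 2 / (2 * σ ^ 2)`, gives the bound even
with exponent `n` in place of `n + 1`.

Prékopa's theorem is the Prékopa–Leindler inequality applied to the fibres. On `ℝ` that inequality
follows from `|A + B| ≥ |A| + |B|` applied to superlevel sets, once both functions are scaled to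
have supremum `1`; the general case follows by induction on the dimension.
-/

open Set Module
open scoped ENNReal Pointwise

/-- `f` is logconcave on the convex set `s`. Values lie in `ℝ≥0∞` so that a logconcave function may
vanish, or have infinite integral, without side conditions. -/
def LogConcaveOn {E : Type*} [AddCommMonoid E] [Module ℝ E] (s : Set E) (f : E → ℝ≥0∞) : Prop :=
  Convex ℝ s ∧ ∀ ⦃x⦄, x ∈ s → ∀ ⦃y⦄, y ∈ s → ∀ ⦃a b : ℝ⦄, 0 < a → 0 < b → a + b = 1 →
    f x ^ a * f y ^ b ≤ f (a • x + b • y)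

/-- `μ` satisfies the Prékopa–Leindler inequality. Isolating it as a property of the measure lets
it be transported along products and linear maps. -/
def PrekopaLeindler {E : Type*} [AddCommMonoid E] [Module ℝ E] [MeasurableSpace E]
    (μ : Measure E) : Prop :=
  ∀ ⦃a b : ℝ⦄, 0 < a → 0 < b → a + b = 1 →
    ∀ ⦃f g h : E → ℝ≥0∞⦄, Measurable f → Measurable g → Measurable h →
      (∀ x y, f x ^ a * g y ^ b ≤ h (a • x + b • y)) →
      (∫⁻ x, f x ∂μ) ^ a * (∫⁻ x, g x ∂μ) ^ b ≤ ∫⁻ x, h x ∂μ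

lemma ennreal_rpow_mul_rpow_of_add_eq_one {a b : ℝ} (ha : 0 ≤ a) (hb : 0 ≤ b) (hab : a + b = 1)
    (x : ℝ≥0∞) : x ^ a * x ^ b = x := by
  rw [← ENNReal.rpow_add_of_nonneg _ _ ha hb, hab, ENNReal.rpow_one]

lemma ennreal_geom_mean_le_arith_mean2_weighted {a b : ℝ} (ha : 0 < a) (hb : 0 < b)
    (hab : a + b = 1) (x y : ℝ≥0∞) :
    x ^ a * y ^ b ≤ ENNReal.ofReal a * x + ENNReal.ofReal b * y := by
  induction x with
  | top => simp [ENNReal.mul_top, ha]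
  | coe x =>
    induction y with
    | top => simp [ENNReal.mul_top, hb]
    | coe y =>
      rw [← ENNReal.coe_rpow_of_nonneg _ ha.le, ← ENNReal.coe_rpow_of_nonneg _ hb.le]
      have := NNReal.geom_mean_le_arith_mean2_weighted a.toNNReal b.toNNReal x y (by
        rw [← Real.toNNReal_add ha.le hb.le, hab, Real.toNNReal_one])
      rw [Real.coe_toNNReal _ ha.le, Real.coe_toNNReal _ hb.le] at this
      simp only [ENNReal.ofReal]
      exact_mod_cast this

lemma volume_add_volume_le_volume_add_of_isCompact {A B : Set ℝ} (hA : IsCompact A)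
    (hB : IsCompact B) (hA_nonempty : A.Nonempty) (hB_nonempty : B.Nonempty) :
    volume A + volume B ≤ volume (A + B) := by
  obtain ⟨a, haA, ha⟩ := hA.exists_isGreatest hA_nonempty
  obtain ⟨b, hbB, hb⟩ := hB.exists_isLeast hB_nonempty
  -- the translates `b +ᵥ A` and `a +ᵥ B` lie in `A + B` and meet only at `a + b`
  have hdisj : AEDisjoint volume (b +ᵥ A) (a +ᵥ B) := by
    refine measure_mono_null (t := {a + b}) ?_ Real.volume_singleton
    rintro _ ⟨⟨x, hx, rfl⟩, y, hy, hxy⟩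
    simp only [vadd_eq_add, mem_singleton_iff] at hxy ⊢
    linarith [ha hx, hb hy]
  calc volume A + volume B = volume (b +ᵥ A) + volume (a +ᵥ B) := by
        rw [measure_vadd, measure_vadd]
    _ = volume ((b +ᵥ A) ∪ (a +ᵥ B)) :=
        (measure_union₀ (hB.vadd a).measurableSet.nullMeasurableSet hdisj).symm
    _ ≤ volume (A + B) := measure_mono <| union_subset
        (add_comm A B ▸ vadd_set_subset_add hbB) (vadd_set_subset_add haA)

lemma volume_add_volume_le_volume_add {A B : Set ℝ} (hA : MeasurableSet A) (hB : MeasurableSet B)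
    (hA_nonempty : A.Nonempty) (hB_nonempty : B.Nonempty) :
    volume A + volume B ≤ volume (A + B) := by
  obtain ⟨a, ha⟩ := hA_nonempty
  obtain ⟨b, hb⟩ := hB_nonempty
  rw [hA.measure_eq_iSup_isCompact volume, hB.measure_eq_iSup_isCompact volume]
  simp only [iSup_and']
  refine ENNReal.biSup_add_biSup_le' ⟨∅, empty_subset A, isCompact_empty⟩
    ⟨∅, empty_subset B, isCompact_empty⟩ fun K ⟨hKA, hK⟩ L ⟨hLB, hL⟩ => ?_
  calc volume K + volume L ≤ volume (insert a K) + volume (insert b L) := by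
        gcongr <;> exact subset_insert _ _
    _ ≤ volume (insert a K + insert b L) :=
        volume_add_volume_le_volume_add_of_isCompact (hK.insert a) (hL.insert b)
          (insert_nonempty a K) (insert_nonempty b L)
    _ ≤ volume (A + B) :=
        measure_mono (add_subset_add (insert_subset ha hKA) (insert_subset hb hLB))

lemma ofReal_mul_volume_add_le_volume_smul_add_smul {a b : ℝ} (ha : 0 < a) (hb : 0 < b)
    {A B : Set ℝ} (hA : MeasurableSet A) (hB : MeasurableSet B) (hA_nonempty : A.Nonempty)
    (hB_nonempty : B.Nonempty) :
    ENNReal.ofReal a * volume A + ENNReal.ofReal b * volume B ≤ volume (a • A + b • B) := by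
  have hscale {r : ℝ} (hr : 0 < r) (S : Set ℝ) : volume (r • S) = ENNReal.ofReal r * volume S := by
    rw [Measure.addHaar_smul, finrank_self, pow_one, abs_of_pos hr]
  rw [← hscale ha, ← hscale hb]
  exact volume_add_volume_le_volume_add (hA.const_smul_of_ne_zero ha.ne')
    (hB.const_smul_of_ne_zero hb.ne') hA_nonempty.smul_set hB_nonempty.smul_set

lemma lintegral_eq_lintegral_meas_ofReal_lt {X : Type*} [MeasurableSpace X] (μ : Measure X)
    {f : X → ℝ≥0∞} (hf : Measurable f) (hf_top : ∀ x, f x ≠ ⊤) :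
    ∫⁻ x, f x ∂μ = ∫⁻ t in Ioi (0 : ℝ), μ {x | ENNReal.ofReal t < f x} := by
  calc ∫⁻ x, f x ∂μ = ∫⁻ x, ENNReal.ofReal (f x).toReal ∂μ := by
        simp only [ENNReal.ofReal_toReal (hf_top _)]
    _ = ∫⁻ t in Ioi (0 : ℝ), μ {x | t < (f x).toReal} :=
        lintegral_eq_lintegral_meas_lt μ (.of_forall fun _ => ENNReal.toReal_nonneg)
          hf.ennreal_toReal.aemeasurable
    _ = ∫⁻ t in Ioi (0 : ℝ), μ {x | ENNReal.ofReal t < f x} := by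
        refine setLIntegral_congr_fun measurableSet_Ioi fun t ht => ?_
        simp only [ENNReal.ofReal_lt_iff_lt_toReal (le_of_lt ht) (hf_top _)]

section RealLine

variable {a b : ℝ} {f g h : ℝ → ℝ≥0∞}

lemma ofReal_mul_volume_lt_add_le_volume_lt (ha : 0 < a) (hb : 0 < b) (hab : a + b = 1)
    (hf : Measurable f) (hg : Measurable g)
    (hfg : ∀ x y, f x ^ a * g y ^ b ≤ h (a • x + b • y)) {t : ℝ≥0∞}
    (htf : ∃ x, t < f x) (htg : ∃ y, t < g y) :
    ENNReal.ofReal a * volume {x | t < f x} + ENNReal.ofReal b * volume {y | t < g y} ≤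
      volume {z | t < h z} := by
  refine (ofReal_mul_volume_add_le_volume_smul_add_smul ha hb (measurableSet_lt measurable_const hf)
    (measurableSet_lt measurable_const hg) htf htg).trans (measure_mono ?_)
  rintro _ ⟨_, ⟨x, hx, rfl⟩, _, ⟨y, hy, rfl⟩, rfl⟩
  calc t = t ^ a * t ^ b := (ennreal_rpow_mul_rpow_of_add_eq_one ha.le hb.le hab t).symm
    _ < f x ^ a * g y ^ b :=
        ENNReal.mul_lt_mul (ENNReal.rpow_lt_rpow hx ha) (ENNReal.rpow_lt_rpow hy hb)
    _ ≤ h (a • x + b • y) := hfg x y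

lemma ofReal_mul_lintegral_add_le_of_iSup_eq_one (ha : 0 < a) (hb : 0 < b) (hab : a + b = 1)
    (hf : Measurable f) (hg : Measurable g) (hh : Measurable h)
    (hf1 : ⨆ x, f x = 1) (hg1 : ⨆ x, g x = 1)
    (hfg : ∀ x y, f x ^ a * g y ^ b ≤ h (a • x + b • y)) :
    ENNReal.ofReal a * (∫⁻ x, f x) + ENNReal.ofReal b * ∫⁻ x, g x ≤ ∫⁻ x, h x := by
  have hfle (x : ℝ) : f x ≤ 1 := hf1 ▸ le_iSup f x
  have hgle (x : ℝ) : g x ≤ 1 := hg1 ▸ le_iSup g x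
  have hfg_min (x y : ℝ) : f x ^ a * g y ^ b ≤ min (h (a • x + b • y)) 1 :=
    le_min (hfg x y) (mul_le_one' (ENNReal.rpow_le_one (hfle x) ha.le)
      (ENNReal.rpow_le_one (hgle y) hb.le))
  have ne_top_of_le_one {φ : ℝ → ℝ≥0∞} (hφ : ∀ x, φ x ≤ 1) (x : ℝ) : φ x ≠ ⊤ :=
    ne_top_of_le_ne_top ENNReal.one_ne_top (hφ x)
  refine le_trans ?_ (lintegral_mono fun x => min_le_left (h x) 1)
  rw [lintegral_eq_lintegral_meas_ofReal_lt volume hf (ne_top_of_le_one hfle),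
    lintegral_eq_lintegral_meas_ofReal_lt volume hg (ne_top_of_le_one hgle),
    lintegral_eq_lintegral_meas_ofReal_lt volume (hh.min measurable_const)
      (ne_top_of_le_one fun x => min_le_right _ _),
    ← lintegral_const_mul' _ _ ENNReal.ofReal_ne_top,
    ← lintegral_const_mul' _ _ ENNReal.ofReal_ne_top]
  refine (le_lintegral_add _ _).trans (lintegral_mono fun t => ?_)
  rcases lt_or_ge (ENNReal.ofReal t) 1 with ht | ht
  · exact ofReal_mul_volume_lt_add_le_volume_lt ha hb hab hf hg hfg_min
      (lt_iSup_iff.1 (ht.trans_eq hf1.symm)) (lt_iSup_iff.1 (ht.trans_eq hg1.symm))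
  · have hempty {φ : ℝ → ℝ≥0∞} (hφ : ∀ x, φ x ≤ 1) : {x | ENNReal.ofReal t < φ x} = ∅ :=
      eq_empty_of_forall_notMem fun x hx => ((hφ x).trans ht).not_gt hx
    simp [hempty hfle, hempty hgle]

lemma rpow_lintegral_mul_le_of_iSup_ne_top (ha : 0 < a) (hb : 0 < b) (hab : a + b = 1)
    (hf : Measurable f) (hg : Measurable g) (hh : Measurable h)
    (hf_top : ⨆ x, f x ≠ ⊤) (hg_top : ⨆ x, g x ≠ ⊤)
    (hfg : ∀ x y, f x ^ a * g y ^ b ≤ h (a • x + b • y)) :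
    (∫⁻ x, f x) ^ a * (∫⁻ x, g x) ^ b ≤ ∫⁻ x, h x := by
  rcases eq_or_ne (⨆ x, f x) 0 with hf0 | hf0
  · simp [ENNReal.iSup_eq_zero.1 hf0, ha]
  rcases eq_or_ne (⨆ x, g x) 0 with hg0 | hg0
  · simp [ENNReal.iSup_eq_zero.1 hg0, hb]
  set F := ⨆ x, f x
  set G := ⨆ x, g x
  set c := F ^ a * G ^ b
  have hc0 : c ≠ 0 := mul_ne_zero (by simp [hf0, hf_top]) (by simp [hg0, hg_top])
  have hc_top : c ≠ ⊤ := ENNReal.mul_ne_top (ENNReal.rpow_ne_top_of_nonneg ha.le hf_top)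
    (ENNReal.rpow_ne_top_of_nonneg hb.le hg_top)
  have hnormalize (x y : ℝ≥0∞) : (F⁻¹ * x) ^ a * (G⁻¹ * y) ^ b = c⁻¹ * (x ^ a * y ^ b) := by
    rw [ENNReal.mul_rpow_of_nonneg _ _ ha.le, ENNReal.mul_rpow_of_nonneg _ _ hb.le,
      ENNReal.inv_rpow, ENNReal.inv_rpow, mul_mul_mul_comm,
      ENNReal.mul_inv (.inr (ENNReal.rpow_ne_top_of_nonneg hb.le hg_top)) (.inl
        (ENNReal.rpow_ne_top_of_nonneg ha.le hf_top))]
  have hadditive := ofReal_mul_lintegral_add_le_of_iSup_eq_one ha hb hab (hf.const_mul F⁻¹)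
    (hg.const_mul G⁻¹) (hh.const_mul c⁻¹)
    (by rw [← ENNReal.mul_iSup, ENNReal.inv_mul_cancel hf0 hf_top])
    (by rw [← ENNReal.mul_iSup, ENNReal.inv_mul_cancel hg0 hg_top])
    (fun x y => by rw [hnormalize]; gcongr; exact hfg x y)
  rw [lintegral_const_mul _ hf, lintegral_const_mul _ hg, lintegral_const_mul _ hh] at hadditive
  rw [← ENNReal.mul_le_mul_iff_right (ENNReal.inv_ne_zero.2 hc_top) (ENNReal.inv_ne_top.2 hc0),
    ← hnormalize]
  exact (ennreal_geom_mean_le_arith_mean2_weighted ha hb hab _ _).trans hadditive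

end RealLine

lemma lintegral_eq_iSup_lintegral_min_natCast {X : Type*} [MeasurableSpace X] {μ : Measure X}
    {f : X → ℝ≥0∞} (hf : Measurable f) : ∫⁻ x, f x ∂μ = ⨆ N : ℕ, ∫⁻ x, min (f x) N ∂μ := by
  rw [← lintegral_iSup (fun N => hf.min measurable_const)
    fun M N hMN x => min_le_min_left _ (by exact_mod_cast hMN)]
  refine lintegral_congr fun x => ?_
  rw [← inf_iSup_eq, ENNReal.iSup_natCast, inf_top_eq]

theorem prekopaLeindler_volume_real : PrekopaLeindler (volume : Measure ℝ) := by
  intro a b ha hb hab f g h hf hg hh hfg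
  have hbdd (φ : ℝ → ℝ≥0∞) (N : ℕ) : ⨆ x, min (φ x) N ≠ ⊤ :=
    ne_top_of_le_ne_top (ENNReal.natCast_ne_top N) (iSup_le fun x => min_le_right _ _)
  have hpow_iSup {c : ℝ} (hc : 0 < c) (u : ℕ → ℝ≥0∞) : (⨆ N, u N) ^ c = ⨆ N, u N ^ c :=
    (ENNReal.orderIsoRpow c hc).map_iSup u
  rw [lintegral_eq_iSup_lintegral_min_natCast hf, lintegral_eq_iSup_lintegral_min_natCast hg,
    hpow_iSup ha, hpow_iSup hb]
  simp only [ENNReal.iSup_mul, ENNReal.mul_iSup]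
  refine iSup₂_le fun M N => rpow_lintegral_mul_le_of_iSup_ne_top ha hb hab
    (hf.min measurable_const) (hg.min measurable_const) hh (hbdd f _) (hbdd g _) fun x y => ?_
  refine le_trans ?_ (hfg x y)
  gcongr <;> exact min_le_left _ _

section Transport

variable {E F : Type*} [MeasurableSpace E] [MeasurableSpace F]

lemma PrekopaLeindler.of_subsingleton [AddCommMonoid E] [Module ℝ E] [Subsingleton E]
    (μ : Measure E) : PrekopaLeindler μ := by
  intro a b ha hb hab f g h _ _ _ hfg
  have : Unique E := uniqueOfSubsingleton 0
  simp only [lintegral_unique]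
  calc (f default * μ univ) ^ a * (g default * μ univ) ^ b
      = f default ^ a * g default ^ b * (μ univ ^ a * μ univ ^ b) := by
        rw [ENNReal.mul_rpow_of_nonneg _ _ ha.le, ENNReal.mul_rpow_of_nonneg _ _ hb.le,
          mul_mul_mul_comm]
    _ = f default ^ a * g default ^ b * μ univ := by
        rw [ennreal_rpow_mul_rpow_of_add_eq_one ha.le hb.le hab]
    _ ≤ h default * μ univ := by
        gcongr
        exact (hfg _ _).trans_eq (congrArg h (Subsingleton.elim _ _))

variable [AddCommMonoid E] [Module ℝ E] [AddCommMonoid F] [Module ℝ F] {μ : Measure E}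

lemma PrekopaLeindler.smul (hμ : PrekopaLeindler μ) (c : ℝ≥0∞) : PrekopaLeindler (c • μ) := by
  intro a b ha hb hab f g h hf hg hh hfg
  simp only [lintegral_smul_measure, smul_eq_mul]
  calc (c * ∫⁻ x, f x ∂μ) ^ a * (c * ∫⁻ x, g x ∂μ) ^ b
      = c ^ a * c ^ b * ((∫⁻ x, f x ∂μ) ^ a * (∫⁻ x, g x ∂μ) ^ b) := by
        rw [ENNReal.mul_rpow_of_nonneg _ _ ha.le, ENNReal.mul_rpow_of_nonneg _ _ hb.le,
          mul_mul_mul_comm]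
    _ = c * ((∫⁻ x, f x ∂μ) ^ a * (∫⁻ x, g x ∂μ) ^ b) := by
        rw [ennreal_rpow_mul_rpow_of_add_eq_one ha.le hb.le hab]
    _ ≤ c * ∫⁻ x, h x ∂μ := by
        gcongr
        exact hμ ha hb hab hf hg hh hfg

lemma PrekopaLeindler.map (hμ : PrekopaLeindler μ) {L : E →ₗ[ℝ] F} (hL : Measurable L) :
    PrekopaLeindler (μ.map L) := by
  intro a b ha hb hab f g h hf hg hh hfg
  rw [lintegral_map hf hL, lintegral_map hg hL, lintegral_map hh hL]
  exact hμ ha hb hab (hf.comp hL) (hg.comp hL) (hh.comp hL) fun x y => by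
    simpa only [map_add, map_smul] using hfg (L x) (L y)

lemma PrekopaLeindler.prod {ν : Measure F} [SFinite ν] (hμ : PrekopaLeindler μ)
    (hν : PrekopaLeindler ν) : PrekopaLeindler (μ.prod ν) := by
  intro a b ha hb hab f g h hf hg hh hfg
  rw [lintegral_prod _ hf.aemeasurable, lintegral_prod _ hg.aemeasurable,
    lintegral_prod _ hh.aemeasurable]
  exact hμ ha hb hab hf.lintegral_prod_right' hg.lintegral_prod_right' hh.lintegral_prod_right'
    fun x x' => hν ha hb hab (hf.comp measurable_prodMk_left) (hg.comp measurable_prodMk_left)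
      (hh.comp measurable_prodMk_left) fun y y' => hfg (x, y) (x', y')

end Transport

section Haar

variable {E : Type*} [NormedAddCommGroup E] [NormedSpace ℝ E] [FiniteDimensional ℝ E]
  [MeasurableSpace E] [BorelSpace E]

lemma PrekopaLeindler.of_finrank_eq {F : Type*} [NormedAddCommGroup F] [NormedSpace ℝ F]
    [FiniteDimensional ℝ F] [MeasurableSpace F] [BorelSpace F] {μ : Measure E}
    [μ.IsAddHaarMeasure] (hμ : PrekopaLeindler μ) (ν : Measure F) [ν.IsAddHaarMeasure]
    (hEF : finrank ℝ E = finrank ℝ F) : PrekopaLeindler ν := by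
  let e : E ≃L[ℝ] F := ContinuousLinearEquiv.ofFinrankEq hEF
  rw [Measure.isAddLeftInvariant_eq_smul ν (μ.map e)]
  exact (hμ.map (L := e.toLinearMap) e.continuous.measurable).smul _

lemma prekopaLeindler_volume_pi (n : ℕ) : PrekopaLeindler (volume : Measure (Fin n → ℝ)) := by
  induction n with
  | zero => exact .of_subsingleton volume
  | succ n ih =>
    exact (prekopaLeindler_volume_real.prod ih).of_finrank_eq volume (by simp [add_comm])

variable (μ : Measure E) [μ.IsAddHaarMeasure]

theorem prekopaLeindler_of_isAddHaarMeasure : PrekopaLeindler μ :=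
  (prekopaLeindler_volume_pi (finrank ℝ E)).of_finrank_eq μ (by simp)

lemma lintegral_comp_inv_smul (f : E → ℝ≥0∞) {r : ℝ} (hr : r ≠ 0) :
    ∫⁻ x, f (r⁻¹ • x) ∂μ = ENNReal.ofReal |r ^ finrank ℝ E| * ∫⁻ x, f x ∂μ := by
  have h := lintegral_map_equiv f (MeasurableEquiv.smul₀ r⁻¹ (inv_ne_zero hr)) (μ := μ)
  rw [MeasurableEquiv.coe_smul₀, Measure.map_addHaar_smul μ (inv_ne_zero hr),
    lintegral_smul_measure, inv_pow, inv_inv] at h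
  exact h.symm

lemma aemeasurable_restrict_of_convexOn {K : Set E} {g : E → ℝ} (hg : ConvexOn ℝ K g) :
    AEMeasurable g (μ.restrict K) := by
  rw [← Measure.restrict_congr_set (interior_ae_eq_of_null_frontier (hg.1.addHaar_frontier μ))]
  exact hg.continuousOn_interior.aemeasurable isOpen_interior.measurableSet

lemma integrable_exp_neg_mul_norm_sq {c : ℝ} (hc : 0 < c) :
    Integrable (fun x : E => Real.exp (-(c * ‖x‖ ^ 2))) μ := by
  rcases subsingleton_or_nontrivial E with _ | _
  · have : IsFiniteMeasure μ := ⟨(Set.subsingleton_univ.isCompact).measure_lt_top⟩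
    exact Integrable.of_subsingleton
  · rw [integrable_fun_norm_addHaar μ (f := fun r => Real.exp (-(c * r ^ 2)))]
    simpa only [Real.rpow_natCast, neg_mul, smul_eq_mul] using
      integrableOn_rpow_mul_exp_neg_mul_sq hc
        (s := ((finrank ℝ E - 1 : ℕ) : ℝ)) (neg_one_lt_zero.trans_le (Nat.cast_nonneg _))

end Haar

section LogConcave

variable {E : Type*} [AddCommGroup E] [Module ℝ E]

lemma LogConcaveOn.mul_le_midpoint_sq {s : Set E} {f : E → ℝ≥0∞} (hf : LogConcaveOn s f) {x y : E}
    (hx : x ∈ s) (hy : y ∈ s) : f x * f y ≤ f (midpoint ℝ x y) ^ 2 := by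
  have h := hf.2 hx hy (one_half_pos (α := ℝ)) one_half_pos (add_halves 1)
  rw [← smul_add, one_div, ← invOf_eq_inv, ← midpoint_eq_smul_add, invOf_eq_inv, ← one_div,
    ← ENNReal.mul_rpow_of_nonneg _ _ one_half_pos.le] at h
  calc f x * f y = ((f x * f y) ^ (1 / 2 : ℝ)) ^ 2 := by
        rw [← ENNReal.rpow_natCast, ← ENNReal.rpow_mul]
        norm_num
    _ ≤ f (midpoint ℝ x y) ^ 2 := by gcongr

/-- Prékopa's theorem on marginals. -/
lemma LogConcaveOn.lintegral {G : Type*} [AddCommMonoid G] [Module ℝ G] [MeasurableSpace E]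
    {μ : Measure E} (hμ : PrekopaLeindler μ) {S : Set G} {F : G → E → ℝ≥0∞}
    (hF : LogConcaveOn (S ×ˢ univ) fun p : G × E => F p.1 p.2)
    (hF_meas : ∀ t ∈ S, Measurable (F t)) : LogConcaveOn S fun t => ∫⁻ x, F t x ∂μ := by
  have hS : Convex ℝ S := fun s hs t ht a b ha hb hab =>
    (hF.1 (mk_mem_prod hs (mem_univ 0)) (mk_mem_prod ht (mem_univ 0)) ha hb hab).1
  refine ⟨hS, fun s hs t ht a b ha hb hab => ?_⟩
  exact hμ ha hb hab (hF_meas s hs) (hF_meas t ht) (hF_meas _ (hS hs ht ha.le hb.le hab))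
    fun x y => hF.2 (mk_mem_prod hs (mem_univ x)) (mk_mem_prod ht (mem_univ y)) ha hb hab

lemma logConcaveOn_univ_indicator_exp_neg {S : Set E} {f : E → ℝ} (hf : ConvexOn ℝ S f) :
    LogConcaveOn univ (S.indicator fun x => ENNReal.ofReal (Real.exp (-f x))) := by
  refine ⟨convex_univ, fun x _ y _ a b ha hb hab => ?_⟩
  by_cases hx : x ∈ S
  swap
  · simp [hx, ha]
  by_cases hy : y ∈ S
  swap
  · simp [hy, hb]
  have hz : a • x + b • y ∈ S := hf.1 hx hy ha.le hb.le hab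
  have hconv : f (a • x + b • y) ≤ a * f x + b * f y := hf.2 hx hy ha.le hb.le hab
  simp only [indicator_of_mem hx, indicator_of_mem hy, indicator_of_mem hz]
  rw [ENNReal.ofReal_rpow_of_nonneg (Real.exp_nonneg _) ha.le,
    ENNReal.ofReal_rpow_of_nonneg (Real.exp_nonneg _) hb.le,
    ← ENNReal.ofReal_mul (by positivity), ← Real.exp_mul, ← Real.exp_mul, ← Real.exp_add]
  gcongr
  linarith

lemma convexOn_perspective {K : Set E} {g : E → ℝ} (hg : ConvexOn ℝ K g) :
    ConvexOn ℝ {p : ℝ × E | 0 < p.1 ∧ p.1⁻¹ • p.2 ∈ K} fun p => p.1 * g (p.1⁻¹ • p.2) := by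
  have hcombine {s t a b : ℝ} (x y : E) (hs : s ≠ 0) (ht : t ≠ 0) :
      (a * s + b * t)⁻¹ • (a • x + b • y) =
        (a * s / (a * s + b * t)) • s⁻¹ • x + (b * t / (a * s + b * t)) • t⁻¹ • y := by
    simp only [smul_add, smul_smul]
    congr 2 <;> field_simp
  refine ⟨?_, ?_⟩
  · rintro ⟨s, x⟩ ⟨hs, hx⟩ ⟨t, y⟩ ⟨ht, hy⟩ a b ha hb hab
    dsimp only at hs hx ht hy
    have hr : 0 < a * s + b * t := convex_Ioi (0 : ℝ) hs ht ha hb hab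
    refine ⟨hr, ?_⟩
    change (a * s + b * t)⁻¹ • (a • x + b • y) ∈ K
    rw [hcombine x y hs.ne' ht.ne']
    exact hg.1 hx hy (by positivity) (by positivity) (by rw [← add_div, div_self hr.ne'])
  · rintro ⟨s, x⟩ ⟨hs, hx⟩ ⟨t, y⟩ ⟨ht, hy⟩ a b ha hb hab
    dsimp only at hs hx ht hy
    have hr : 0 < a * s + b * t := convex_Ioi (0 : ℝ) hs ht ha hb hab
    change (a * s + b * t) * g ((a * s + b * t)⁻¹ • (a • x + b • y)) ≤
      a * (s * g (s⁻¹ • x)) + b * (t * g (t⁻¹ • y))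
    calc (a * s + b * t) * g ((a * s + b * t)⁻¹ • (a • x + b • y))
        ≤ (a * s + b * t) * (a * s / (a * s + b * t) * g (s⁻¹ • x) +
            b * t / (a * s + b * t) * g (t⁻¹ • y)) := by
          rw [hcombine x y hs.ne' ht.ne']
          gcongr
          exact hg.2 hx hy (by positivity) (by positivity) (by rw [← add_div, div_self hr.ne'])
      _ = a * (s * g (s⁻¹ • x)) + b * (t * g (t⁻¹ • y)) := by field_simp

theorem logConcaveOn_indicator_exp_neg_perspective {K : Set E} {g : E → ℝ}
    (hg : ConvexOn ℝ K g) :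
    LogConcaveOn (Ioi (0 : ℝ) ×ˢ univ) fun p : ℝ × E =>
      K.indicator (fun x => ENNReal.ofReal (Real.exp (-(p.1 * g x)))) (p.1⁻¹ • p.2) := by
  have hconv : Convex ℝ (Ioi (0 : ℝ) ×ˢ (univ : Set E)) := (convex_Ioi 0).prod convex_univ
  let D : Set (ℝ × E) := {p | 0 < p.1 ∧ p.1⁻¹ • p.2 ∈ K}
  have heq {p : ℝ × E} (hp : p ∈ Ioi (0 : ℝ) ×ˢ (univ : Set E)) :
      D.indicator (fun p => ENNReal.ofReal (Real.exp (-(p.1 * g (p.1⁻¹ • p.2))))) p =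
        K.indicator (fun x => ENNReal.ofReal (Real.exp (-(p.1 * g x)))) (p.1⁻¹ • p.2) := by
    have hD : p ∈ D ↔ p.1⁻¹ • p.2 ∈ K := and_iff_right hp.1
    by_cases hpK : p.1⁻¹ • p.2 ∈ K
    · rw [indicator_of_mem hpK, indicator_of_mem (hD.2 hpK)]
    · rw [indicator_of_notMem hpK, indicator_of_notMem (mt hD.1 hpK)]
  refine ⟨hconv, fun p hp q hq a b ha hb hab => ?_⟩
  dsimp only
  rw [← heq hp, ← heq hq, ← heq (hconv hp hq ha.le hb.le hab)]
  exact (logConcaveOn_univ_indicator_exp_neg (convexOn_perspective hg)).2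
    (mem_univ p) (mem_univ q) ha hb hab

end LogConcave

section ConvexPotential

variable {E : Type*} [NormedAddCommGroup E] [NormedSpace ℝ E] [FiniteDimensional ℝ E]
  [MeasurableSpace E] [BorelSpace E] (μ : Measure E) [μ.IsAddHaarMeasure] {K : Set E} {g : E → ℝ}

theorem logConcaveOn_pow_mul_setLIntegral_exp_neg_mul (hg : ConvexOn ℝ K g) :
    LogConcaveOn (Ioi 0) fun t : ℝ =>
      ENNReal.ofReal (t ^ finrank ℝ E) * ∫⁻ x in K, ENNReal.ofReal (Real.exp (-(t * g x))) ∂μ := by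
  -- `K` need not be Borel, nor `g` measurable up to the boundary, so work on the interior
  let F (t : ℝ) (x : E) : ℝ≥0∞ :=
    (interior K).indicator (fun x => ENNReal.ofReal (Real.exp (-(t * g x)))) (t⁻¹ • x)
  have hcont (t : ℝ) :
      ContinuousOn (fun x => ENNReal.ofReal (Real.exp (-(t * g x)))) (interior K) :=
    ENNReal.continuous_ofReal.comp_continuousOn
      (hg.continuousOn_interior.const_mul t).neg.rexp
  have hF_meas (t : ℝ) : Measurable (F t) := by
    classical
    simp only [F, ← piecewise_eq_indicator]
    exact ((hcont t).measurable_piecewise continuousOn_const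
      isOpen_interior.measurableSet).comp (measurable_const_smul t⁻¹)
  have hF_lintegral {t : ℝ} (ht : 0 < t) : ∫⁻ x, F t x ∂μ = ENNReal.ofReal (t ^ finrank ℝ E) *
      ∫⁻ x in K, ENNReal.ofReal (Real.exp (-(t * g x))) ∂μ := by
    rw [lintegral_comp_inv_smul μ _ ht.ne', abs_of_pos (pow_pos ht _),
      lintegral_indicator isOpen_interior.measurableSet,
      setLIntegral_congr (interior_ae_eq_of_null_frontier (hg.1.addHaar_frontier μ))]
  have hmarginal : LogConcaveOn (Ioi 0) fun t => ∫⁻ x, F t x ∂μ :=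
    .lintegral (prekopaLeindler_of_isAddHaarMeasure μ)
      (logConcaveOn_indicator_exp_neg_perspective (hg.subset interior_subset hg.1.interior))
      fun t _ => hF_meas t
  refine ⟨hmarginal.1, fun s hs t ht a b ha hb hab => ?_⟩
  dsimp only
  rw [← hF_lintegral hs, ← hF_lintegral ht,
    ← hF_lintegral (hmarginal.1 hs ht ha.le hb.le hab)]
  exact hmarginal.2 hs ht ha hb hab

theorem integral_exp_mul_integral_exp_le_of_convexOn (hg : ConvexOn ℝ K g)
    (hint : IntegrableOn (fun x => Real.exp (-g x)) K μ) {α : ℝ} (hα : |α| < 1) :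
    (∫ x in K, Real.exp (-((1 - α) * g x)) ∂μ) * (∫ x in K, Real.exp (-((1 + α) * g x)) ∂μ) ≤
      (1 / (1 - α ^ 2)) ^ finrank ℝ E * (∫ x in K, Real.exp (-g x) ∂μ) ^ 2 := by
  obtain ⟨hα_lower, hα_upper⟩ := abs_lt.1 hα
  set n := finrank ℝ E
  let I (t : ℝ) : ℝ≥0∞ := ∫⁻ x in K, ENNReal.ofReal (Real.exp (-(t * g x))) ∂μ
  have toReal_I (t : ℝ) : ∫ x in K, Real.exp (-(t * g x)) ∂μ = (I t).toReal :=
    integral_eq_lintegral_of_nonneg_ae (.of_forall fun x => Real.exp_nonneg _) <|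
      (Real.measurable_exp.comp_aemeasurable
        ((aemeasurable_restrict_of_convexOn μ hg).const_mul t).neg).aestronglyMeasurable
  have hmid : midpoint ℝ (1 - α) (1 + α) = 1 := by
    rw [midpoint_eq_smul_add, smul_eq_mul, invOf_eq_inv]
    ring
  have hI_one : I 1 ≠ ⊤ := by
    simpa only [I, one_mul] using hint.lintegral_lt_top.ne
  have hmoments := (logConcaveOn_pow_mul_setLIntegral_exp_neg_mul μ hg).mul_le_midpoint_sq
    (x := 1 - α) (y := 1 + α) (by rw [mem_Ioi]; linarith) (by rw [mem_Ioi]; linarith)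
  rw [hmid, one_pow, ENNReal.ofReal_one, one_mul] at hmoments
  have hreal := ENNReal.toReal_mono (ENNReal.pow_ne_top hI_one) hmoments
  simp only [ENNReal.toReal_mul, ENNReal.toReal_pow] at hreal
  rw [ENNReal.toReal_ofReal (pow_nonneg (by linarith) n),
    ENNReal.toReal_ofReal (pow_nonneg (by linarith) n), ← toReal_I, ← toReal_I, ← toReal_I,
    mul_mul_mul_comm, ← mul_pow, mul_comm (1 - α), ← sq_sub_sq] at hreal
  simp only [one_mul, one_pow] at hreal
  rwa [one_div_pow, one_div_mul_eq_div, le_div_iff₀' (pow_pos (by nlinarith) _)]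

end ConvexPotential

theorem gaussian_integral_logconcavity_bound_general {E : Type*} [NormedAddCommGroup E]
    [NormedSpace ℝ E] [FiniteDimensional ℝ E] [MeasurableSpace E] [BorelSpace E] (μ : Measure E)
    [μ.IsAddHaarMeasure] {K : Set E} (hK : Convex ℝ K) {σ α : ℝ} (hσ : σ ≠ 0) (hα : |α| < 1) :
    (∫ x in K, Real.exp (-(1 - α) * ‖x‖ ^ 2 / (2 * σ ^ 2)) ∂μ) *
      (∫ x in K, Real.exp (-(1 + α) * ‖x‖ ^ 2 / (2 * σ ^ 2)) ∂μ) ≤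
    (1 / (1 - α ^ 2)) ^ finrank ℝ E *
      (∫ x in K, Real.exp (-‖x‖ ^ 2 / (2 * σ ^ 2)) ∂μ) ^ 2 := by
  have hc : 0 < 1 / (2 * σ ^ 2) := by positivity
  have hconv : ConvexOn ℝ K fun x => 1 / (2 * σ ^ 2) * ‖x‖ ^ 2 :=
    ((convexOn_norm hK).pow (fun x _ => norm_nonneg x) 2).smul hc.le
  convert integral_exp_mul_integral_exp_le_of_convexOn μ hconv
    (integrable_exp_neg_mul_norm_sq μ hc).integrableOn hα using 5 <;> ring_nf

/-- Logconcavity-based moment inequality: for a convex body `K`, `σ > 0`, and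
`0 < α < 1`,
`(∫_K e^{-(1-α)‖x‖²/(2σ²)})·(∫_K e^{-(1+α)‖x‖²/(2σ²)}) ≤
 (1/(1-α²))^{n+1}·(∫_K e^{-‖x‖²/(2σ²)})²`. -/
theorem gaussian_integral_logconcavity_bound
    (n : ℕ) (hn : 1 ≤ n)
    (K : Set (EuclideanSpace ℝ (Fin n)))
    (hKconv : Convex ℝ K) (hKcomp : IsCompact K) (hKint : (interior K).Nonempty)
    (σ α : ℝ) (hσ : 0 < σ) (hα0 : 0 < α) (hα1 : α < 1) :
    (∫ x in K, Real.exp (-(1 - α) * ‖x‖ ^ 2 / (2 * σ ^ 2))) *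
      (∫ x in K, Real.exp (-(1 + α) * ‖x‖ ^ 2 / (2 * σ ^ 2))) ≤
    (1 / (1 - α ^ 2)) ^ (n + 1) *
      (∫ x in K, Real.exp (-‖x‖ ^ 2 / (2 * σ ^ 2))) ^ 2 := by
  have hone_le : 1 ≤ 1 / (1 - α ^ 2) := (one_le_div (by nlinarith)).2 (by nlinarith)
  refine (gaussian_integral_logconcavity_bound_general volume hKconv hσ.ne'
    (abs_lt.2 ⟨by linarith, hα1⟩)).trans ?_
  rw [finrank_euclideanSpace_fin]
  gcongr
  exact n.le_succ
end
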